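/- Let p > 2, let 𝒫 and 𝒬 be families of partition–weight pairs on countable sets A and B respectively, each satisfying the envelope property, and let X = X(𝒫), Y = X(𝒬) with natural coordinate bases (x_a)_{a∈A} and (y_b)_{b∈B}. Suppose S : X → L_p([0,1]) and T : Y → L_p([0,1]) are bounded linear maps that are bounded below. Then there is a constant C > 0 such that for all scalars (c_{a,b})_{a∈A,b∈B} with only finitely many nonzero, every (P,(w_a)) ∈ 𝒫 and every (Q,(w'_b)) ∈ 𝒬: ‖Σ_{a,b} c_{a,b} (Sx_a ⊗ Ty_b)‖_{L_p([0,1]²)} ≥ C (Σ_{p₀∈P, q₀∈Q} (Σ_{a∈p₀, b∈q₀} c_{a,b}² w_a² (w'_b)²)^{p/2})^{1/p}. -/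

import Mathlib

open scoped ENNReal
open MeasureTheory Filter

noncomputable section

variable {α : Type*}

/-- `P` is a partition of the type `α`: a collection of pairwise disjoint
nonempty subsets of `α` whose union is all of `α`. -/
def IsPartition (P : Set (Set α)) : Prop :=
  (∀ N ∈ P, N.Nonempty) ∧ P.PairwiseDisjoint id ∧ ⋃₀ P = Set.univ

/-- A weight function takes values in `(0,1]`. -/
def IsWeight (W : α → ℝ) : Prop := ∀ a, W a ∈ Set.Ioc (0 : ℝ) 1

/-- `‖x‖_{P,W} = (Σ_{N∈P} (Σ_{j∈N} x_j² w_j²)^{p/2})^{1/p}`, valued in `[0,∞]`. -/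
def pwNorm (p : ℝ) (P : Set (Set α)) (W : α → ℝ) (x : α → ℝ) : ℝ≥0∞ :=
  (∑' N : P, (∑' j : N.1, ENNReal.ofReal ((x j.1) ^ 2 * (W j.1) ^ 2)) ^ (p / 2)) ^ (1 / p)

/-- A partition–weight pair on `α`. -/
abbrev PWPair (α : Type*) := Set (Set α) × (α → ℝ)

/-- Every member of the family is a genuine partition–weight pair. -/
def IsPWFamily (𝒞 : Set (PWPair α)) : Prop :=
  ∀ PW ∈ 𝒞, IsPartition PW.1 ∧ IsWeight PW.2

/-- `‖x‖_𝒞 = sup_{(P,W) ∈ 𝒞} ‖x‖_{P,W}`. -/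
def famNorm (p : ℝ) (𝒞 : Set (PWPair α)) (x : α → ℝ) : ℝ≥0∞ :=
  ⨆ PW ∈ 𝒞, pwNorm p PW.1 PW.2 x

/-- The block of the partition `Q` containing `b` (for a genuine partition this is
the unique element of `Q` containing `b`). -/
def blockOf (Q : Set (Set α)) (b : α) : Set α := ⋃₀ {q ∈ Q | b ∈ q}

/-- The partition `P(Q,T)` obtained from a partition `Q` and a choice `T` of a
partition–weight pair for each block of `Q`. -/
def envPartition (Q : Set (Set α)) (T : Set α → PWPair α) : Set (Set α) :=
  {K | K.Nonempty ∧ ∃ q ∈ Q, ∃ s ∈ (T q).1, K = q ∩ s}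

/-- The weight `W(Q,T)`: on the block `q` of `Q` it is the weight chosen by `T q`. -/
def envWeight (Q : Set (Set α)) (T : Set α → PWPair α) : α → ℝ :=
  fun b => (T (blockOf Q b)).2 b

/-- A family of partition–weight pairs satisfies the envelope property if it is
closed under the operation `(Q, T) ↦ (P(Q,T), W(Q,T))`. -/
def EnvelopeProp (𝒞 : Set (PWPair α)) : Prop :=
  ∀ Q : Set (Set α), IsPartition Q → ∀ T : Set α → PWPair α, (∀ q ∈ Q, T q ∈ 𝒞) →
    (envPartition Q T, envWeight Q T) ∈ 𝒞

/-- The family `𝒞̃` of all pairs `(P(Q,T), W(Q,T))`. -/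
def envFam (𝒞 : Set (PWPair α)) : Set (PWPair α) :=
  {PW | ∃ Q T, IsPartition Q ∧ (∀ q ∈ Q, T q ∈ 𝒞) ∧
    PW = (envPartition Q T, envWeight Q T)}

/-- The envelope norm generated by `𝒞`. -/
def envNorm (p : ℝ) (𝒞 : Set (PWPair α)) (x : α → ℝ) : ℝ≥0∞ := famNorm p (envFam 𝒞) x

/-- The coordinate basis vector `e_a` of a sequence space on `α`. -/
def coordVec (a : α) : α → ℝ := Set.indicator {a} 1

/-!
If `z` is a standard Gaussian vector in a Hilbert space, then `⟪z, x⟫` is distributed as `‖x‖` times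
a standard normal variable. Testing vector coefficients against `z` and averaging therefore extends
a lower estimate by `‖·‖_{P,W}` from scalar to Hilbert-space-valued coefficients: since `p ≥ 2`, the
`L_p` average dominates the square function on each block, while on the `L_p` side the average is
exact and costs the factor `‖N(0,1)‖_p`.

For doubly indexed coefficients, apply the estimate of `T` at each fixed first variable. It bounds
the `L_p` norm from below by a sum over the blocks of `Q` of `p`-th powers of Hilbert norms, and for
each of these blocks the Hilbert-valued estimate of `S` applies.
-/

open ProbabilityTheory
open scoped lp RealInnerProductSpace

section Lebesgue

variable {Ω : Type*} [MeasurableSpace Ω]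

theorem eLpNorm_ofReal_rpow {E : Type*} [ENorm E] {p : ℝ} (hp : 0 < p) (f : Ω → E)
    (μ : Measure Ω) : eLpNorm f (ENNReal.ofReal p) μ ^ p = ∫⁻ t, ‖f t‖ₑ ^ p ∂μ := by
  rw [eLpNorm_eq_eLpNorm' (by simpa using hp) ENNReal.ofReal_ne_top,
    ENNReal.toReal_ofReal hp.le, lintegral_rpow_enorm_eq_rpow_eLpNorm' hp]

theorem tsum_lintegral_le_lintegral_tsum {ι : Type*} {μ : Measure Ω} {f : ι → Ω → ℝ≥0∞}
    (hf : ∀ i, AEMeasurable (f i) μ) : ∑' i, ∫⁻ t, f i t ∂μ ≤ ∫⁻ t, ∑' i, f i t ∂μ := by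
  rw [ENNReal.tsum_eq_iSup_sum]
  refine iSup_le fun s => ?_
  rw [← lintegral_finsetSum' _ fun i _ => hf i]
  exact lintegral_mono fun t => ENNReal.sum_le_tsum s

theorem tsum_rpow_le_rpow_tsum {ι : Type*} {q : ℝ} (hq : 1 ≤ q) (f : ι → ℝ≥0∞) :
    ∑' i, f i ^ q ≤ (∑' i, f i) ^ q := by
  have rpow_eq_mul (x : ℝ≥0∞) : x ^ q = x * x ^ (q - 1) := by
    conv_rhs => rw [← ENNReal.rpow_one x, ← ENNReal.rpow_mul, one_mul]
    rw [← ENNReal.rpow_add_of_nonneg _ _ zero_le_one (sub_nonneg.2 hq), add_sub_cancel]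
  simp only [rpow_eq_mul]
  rw [← ENNReal.tsum_mul_right]
  have := sub_nonneg.2 hq
  gcongr with i
  exact ENNReal.le_tsum i

end Lebesgue

section GaussianAveraging

/-- The `L_p` norm of a standard normal variable; it is the loss incurred by passing from scalar
to Hilbert-space-valued coefficients. -/
def gaussianLpNorm (p : ℝ≥0∞) : ℝ≥0∞ := eLpNorm id p (gaussianReal 0 1)

theorem gaussianLpNorm_ne_top {p : ℝ≥0∞} (hp : p ≠ ⊤) : gaussianLpNorm p ≠ ⊤ :=
  (memLp_id_gaussianReal' p hp).eLpNorm_ne_top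

theorem gaussianLpNorm_two : gaussianLpNorm 2 = 1 := by
  have second_moment : ∫⁻ u : ℝ, ‖u‖ₑ ^ 2 ∂gaussianReal 0 1 = 1 := by
    have h := (memLp_id_gaussianReal (μ := 0) (v := 1) 2).ofReal_variance_eq
    rw [variance_id_gaussianReal, evariance_eq_lintegral_ofReal] at h
    simpa [Real.enorm_eq_ofReal_abs, ← ENNReal.ofReal_pow] using h.symm
  have h := eLpNorm_ofReal_rpow two_pos id (gaussianReal 0 1)
  simp only [id, ENNReal.ofReal_ofNat, ENNReal.rpow_two, second_moment] at h
  exact (ENNReal.pow_right_strictMono two_ne_zero).injective (h.trans (one_pow 2).symm)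

theorem one_le_gaussianLpNorm {p : ℝ≥0∞} (hp : 2 ≤ p) : 1 ≤ gaussianLpNorm p :=
  gaussianLpNorm_two.ge.trans
    (eLpNorm_le_eLpNorm_of_exponent_le hp measurable_id.aestronglyMeasurable)

variable {E : Type*} [NormedAddCommGroup E] [InnerProductSpace ℝ E] [FiniteDimensional ℝ E]
  [MeasurableSpace E] [BorelSpace E]

theorem stdGaussian_map_inner (x : E) :
    (stdGaussian E).map (fun z => ⟪x, z⟫) = (gaussianReal 0 1).map (‖x‖ * ·) := by
  have h := IsGaussian.map_eq_gaussianReal (μ := stdGaussian E) (innerSL ℝ x)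
  rw [integral_strongDual_stdGaussian, variance_dual_stdGaussian, innerSL_apply_norm] at h
  rw [gaussianReal_map_const_mul, mul_zero, mul_one]
  rwa [Real.toNNReal_of_nonneg (sq_nonneg _)] at h

theorem eLpNorm_inner_stdGaussian (x : E) (p : ℝ≥0∞) :
    eLpNorm (fun z => ⟪x, z⟫) p (stdGaussian E) = ‖x‖ₑ * gaussianLpNorm p := by
  calc eLpNorm (fun z => ⟪x, z⟫) p (stdGaussian E)
      = eLpNorm id p ((stdGaussian E).map fun z => ⟪x, z⟫) :=
        (eLpNorm_map_measure (g := id) measurable_id.aestronglyMeasurable (by fun_prop)).symm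
    _ = eLpNorm (‖x‖ • id) p (gaussianReal 0 1) := by
        rw [stdGaussian_map_inner,
          eLpNorm_map_measure measurable_id.aestronglyMeasurable (by fun_prop)]
        rfl
    _ = ‖x‖ₑ * gaussianLpNorm p := by rw [eLpNorm_const_smul, enorm_norm, gaussianLpNorm]

theorem lintegral_enorm_inner_rpow_stdGaussian {p : ℝ} (hp : 0 < p) (x : E) :
    ∫⁻ z, ‖⟪x, z⟫‖ₑ ^ p ∂stdGaussian E = (‖x‖ₑ * gaussianLpNorm (ENNReal.ofReal p)) ^ p := by
  rw [← eLpNorm_inner_stdGaussian, eLpNorm_ofReal_rpow hp]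

end GaussianAveraging

section WeightedRestrict

/-- The linear map sending `x` to its weighted restriction `(W j * x j)_{j ∈ N}`, so that the inner
sum over the block `N` in `pwNorm` is the square of a Hilbert space norm. -/
def weightedRestrict (N : Set α) (W : α → ℝ) : (α →₀ ℝ) →ₗ[ℝ] ℓ²(N, ℝ) where
  toFun x := ⟨fun j => W j * x j, memℓp_gen <| summable_of_hasFiniteSupport <|
    (x.hasFiniteSupport.preimage Subtype.val_injective.injOn).subset fun j hj => by
      contrapose! hj
      simp_all⟩
  map_add' x y := by ext j; exact mul_add _ _ _
  map_smul' r x := by ext j; exact mul_left_comm _ _ _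

theorem enorm_weightedRestrict_sq (N : Set α) (W : α → ℝ) (x : α →₀ ℝ) :
    ‖weightedRestrict N W x‖ₑ ^ 2 = ∑' j : N, ENNReal.ofReal (x j ^ 2 * W j ^ 2) := by
  have h := lp.hasSum_norm (p := 2) (by norm_num) (weightedRestrict N W x)
  simp only [ENNReal.toReal_ofNat, Real.rpow_two] at h
  rw [← ofReal_norm, ← ENNReal.ofReal_pow (norm_nonneg _), ← h.tsum_eq,
    ENNReal.ofReal_tsum_of_nonneg (fun _ => by positivity) h.summable]
  refine tsum_congr fun j => congrArg ENNReal.ofReal ?_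
  rw [Real.norm_eq_abs, sq_abs]
  exact (mul_pow _ _ _).trans (mul_comm _ _)

theorem enorm_weightedRestrict_rpow (p : ℝ) (N : Set α) (W : α → ℝ) (x : α →₀ ℝ) :
    ‖weightedRestrict N W x‖ₑ ^ p =
      (∑' j : N, ENNReal.ofReal (x j ^ 2 * W j ^ 2)) ^ (p / 2) := by
  rw [← enorm_weightedRestrict_sq, ← ENNReal.rpow_natCast_mul]
  congr 1
  push_cast
  ring

end WeightedRestrict

section PWNorm

variable {p : ℝ}

theorem pwNorm_rpow (hp : 0 < p) (P : Set (Set α)) (W x : α → ℝ) :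
    pwNorm p P W x ^ p =
      ∑' N : P, (∑' j : N.1, ENNReal.ofReal (x j ^ 2 * W j ^ 2)) ^ (p / 2) := by
  rw [pwNorm, one_div, ENNReal.rpow_inv_rpow hp.ne']

theorem pwNorm_rpow_eq_tsum_enorm_weightedRestrict (hp : 0 < p) (P : Set (Set α)) (W : α → ℝ)
    (x : α →₀ ℝ) : pwNorm p P W x ^ p = ∑' N : P, ‖weightedRestrict N.1 W x‖ₑ ^ p := by
  simp only [pwNorm_rpow hp, enorm_weightedRestrict_rpow]

theorem pwNorm_le_l2 (hp : 2 ≤ p) {P : Set (Set α)} (hP : P.PairwiseDisjoint id) {W : α → ℝ}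
    (hW : ∀ a, |W a| ≤ 1) (x : α → ℝ) :
    pwNorm p P W x ≤ (∑' a, ENNReal.ofReal (x a ^ 2)) ^ (1 / 2 : ℝ) := by
  have hp0 : 0 < p := two_pos.trans_le hp
  have weight_le (a : α) : ENNReal.ofReal (x a ^ 2 * W a ^ 2) ≤ ENNReal.ofReal (x a ^ 2) :=
    ENNReal.ofReal_le_ofReal <|
      mul_le_of_le_one_right (sq_nonneg _) ((sq_le_one_iff_abs_le_one _).2 (hW a))
  have sum_blocks_le : ∑' N : P, ∑' j : N.1, ENNReal.ofReal (x j ^ 2 * W j ^ 2) ≤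
      ∑' a, ENNReal.ofReal (x a ^ 2) := by
    refine (ENNReal.tsum_biUnion' (f := fun a => ENNReal.ofReal (x a ^ 2 * W a ^ 2))
      hP).ge.trans ?_
    exact (ENNReal.tsum_comp_le_tsum_of_injective Subtype.val_injective _).trans
      (ENNReal.tsum_le_tsum weight_le)
  rw [pwNorm, one_div p, ENNReal.rpow_inv_le_iff hp0, ← ENNReal.rpow_mul, one_div_mul_eq_div]
  exact (tsum_rpow_le_rpow_tsum ((one_le_div₀ two_pos).2 hp) _).trans
    (ENNReal.rpow_le_rpow sum_blocks_le (by positivity))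

theorem pwNorm_le_famNorm {𝒞 : Set (PWPair α)} {PW : PWPair α} (hPW : PW ∈ 𝒞) (x : α → ℝ) :
    pwNorm p PW.1 PW.2 x ≤ famNorm p 𝒞 x :=
  le_iSup₂ (f := fun (PW : PWPair α) (_ : PW ∈ 𝒞) => pwNorm p PW.1 PW.2 x) PW hPW

theorem famNorm_finsupp_lt_top (hp : 2 ≤ p) {𝒞 : Set (PWPair α)} (h𝒞 : IsPWFamily 𝒞)
    (x : α →₀ ℝ) : famNorm p 𝒞 x < ⊤ := by
  have l2_lt_top : (∑' a, ENNReal.ofReal (x a ^ 2)) ^ (1 / 2 : ℝ) < ⊤ := by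
    rw [tsum_eq_sum (s := x.support) fun a ha => by simp [Finsupp.notMem_support_iff.1 ha]]
    exact ENNReal.rpow_lt_top_of_nonneg (by positivity) (ENNReal.sum_ne_top.2 fun _ _ =>
      ENNReal.ofReal_ne_top)
  refine (iSup₂_le fun PW hPW => ?_).trans_lt l2_lt_top
  obtain ⟨⟨-, hdisj, -⟩, hW⟩ := h𝒞 PW hPW
  exact pwNorm_le_l2 hp hdisj (fun a => abs_le.2 ⟨by linarith [(hW a).1], (hW a).2⟩) x

end PWNorm

section Synthesis

variable {Ω : Type*}

/-- The vector-valued function `∑ a, g a ⊗ u a` with values in the space of the coefficients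
`u a`; for scalar coefficients it is a linear combination of the functions `g a`. -/
def synthesis {E : Type*} [AddCommMonoid E] [Module ℝ E] (g : α → Ω → ℝ) (u : α →₀ E)
    (t : Ω) : E :=
  u.sum fun a x => g a t • x

theorem map_synthesis {E F : Type*} [AddCommMonoid E] [Module ℝ E] [AddCommMonoid F] [Module ℝ F]
    (L : E →ₗ[ℝ] F) (g : α → Ω → ℝ) (u : α →₀ E) (t : Ω) :
    L (synthesis g u t) = synthesis g (Finsupp.mapRange.linearMap L u) t := by
  rw [synthesis, synthesis, Finsupp.mapRange.linearMap_apply,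
    Finsupp.sum_mapRange_index fun _ => smul_zero _, map_finsuppSum]
  simp only [map_smul]

theorem synthesis_add {E : Type*} [AddCommMonoid E] [Module ℝ E] (g : α → Ω → ℝ) (u v : α →₀ E) :
    synthesis g (u + v) = synthesis g u + synthesis g v :=
  funext fun _ => Finsupp.sum_add_index' (fun _ => smul_zero _) fun _ => smul_add _

theorem synthesis_single {E : Type*} [AddCommMonoid E] [Module ℝ E] (g : α → Ω → ℝ) (a : α) (x : E)
    (t : Ω) : synthesis g (Finsupp.single a x) t = g a t • x :=
  Finsupp.sum_single_index (smul_zero _)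

theorem stronglyMeasurable_synthesis [MeasurableSpace Ω] {E : Type*} [NormedAddCommGroup E]
    [NormedSpace ℝ E] {g : α → Ω → ℝ} (hg : ∀ a, Measurable (g a)) (u : α →₀ E) :
    StronglyMeasurable (synthesis g u) :=
  Finset.stronglyMeasurable_fun_sum _ fun a _ => (hg a).stronglyMeasurable.smul_const (u a)

theorem synthesis_synthesis_curry {β Ω' : Type*} (f : α → Ω → ℝ) (g : β → Ω' → ℝ)
    (c : α × β →₀ ℝ) (s : Ω) (t : Ω') :
    synthesis g (synthesis f c.curry s) t =
      ∑ ab ∈ c.support, c ab * f ab.1 s * g ab.2 t := by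
  calc synthesis g (synthesis f c.curry s) t
      = Finsupp.linearCombination ℝ (g · t) (synthesis f c.curry s) := by
        simp only [synthesis, Finsupp.linearCombination_apply, smul_eq_mul, mul_comm]
    _ = c.curry.sum fun a y => y.sum fun b r => f a s * (r * g b t) := by
        simp only [synthesis, map_finsuppSum, map_smul, Finsupp.linearCombination_apply,
          smul_eq_mul, Finsupp.mul_sum]
    _ = ∑ ab ∈ c.support, c ab * f ab.1 s * g ab.2 t :=
        (Finsupp.sum_curry_index c fun a b r => f a s * (r * g b t)).trans
          (Finset.sum_congr rfl fun _ _ => by ring)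

end Synthesis

section HilbertCoefficients

variable {E : Type*} [NormedAddCommGroup E] [InnerProductSpace ℝ E]

/-- The scalar coefficients `⟪z, u a⟫` obtained from the vector coefficients `u a`, as a linear
function of the test vector `z`. -/
def innerCoeff (u : α →₀ E) : E →ₗ[ℝ] α →₀ ℝ where
  toFun z := Finsupp.mapRange.linearMap (innerₗ E z) u
  map_add' z z' := by ext a; exact inner_add_left z z' (u a)
  map_smul' r z := by ext a; exact real_inner_smul_left z (u a) r

theorem synthesis_innerCoeff {Ω : Type*} (g : α → Ω → ℝ) (u : α →₀ E) (z : E) (t : Ω) :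
    synthesis g (innerCoeff u z) t = ⟪z, synthesis g u t⟫ :=
  (map_synthesis (innerₗ E z) g u t).symm

theorem continuous_weightedRestrict_innerCoeff [FiniteDimensional ℝ E] (N : Set α) (W : α → ℝ)
    (u : α →₀ E) : Continuous fun z => weightedRestrict N W (innerCoeff u z) :=
  (weightedRestrict N W ∘ₗ innerCoeff u).continuous_of_finiteDimensional

variable [FiniteDimensional ℝ E] [MeasurableSpace E] [BorelSpace E] {p : ℝ}

theorem tsum_norm_sq_le_lintegral_stdGaussian (N : Set α) (W : α → ℝ) (u : α →₀ E) :
    ∑' j : N, ENNReal.ofReal (‖u j‖ ^ 2 * W j ^ 2) ≤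
      ∫⁻ z, ‖weightedRestrict N W (innerCoeff u z)‖ₑ ^ (2 : ℝ) ∂stdGaussian E := by
  have coordinate_moment (j : N) : ENNReal.ofReal (‖u j‖ ^ 2 * W j ^ 2) =
      ∫⁻ z, ENNReal.ofReal (⟪z, u j⟫ ^ 2 * W j ^ 2) ∂stdGaussian E := by
    have h := lintegral_enorm_inner_rpow_stdGaussian two_pos (W j • u j)
    rw [ENNReal.ofReal_ofNat, gaussianLpNorm_two, mul_one] at h
    simp only [ENNReal.rpow_two, ← ofReal_norm, ← ENNReal.ofReal_pow (norm_nonneg _)] at h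
    simp only [real_inner_smul_left, norm_smul, mul_pow, Real.norm_eq_abs, sq_abs] at h
    simp only [mul_comm _ (W j ^ 2), real_inner_comm (u j), h]
  simp only [ENNReal.rpow_two, enorm_weightedRestrict_sq, coordinate_moment]
  exact tsum_lintegral_le_lintegral_tsum fun j => by fun_prop

theorem tsum_norm_sq_rpow_le_lintegral_stdGaussian (hp : 2 ≤ p) (N : Set α) (W : α → ℝ)
    (u : α →₀ E) :
    (∑' j : N, ENNReal.ofReal (‖u j‖ ^ 2 * W j ^ 2)) ^ (p / 2) ≤
      ∫⁻ z, ‖weightedRestrict N W (innerCoeff u z)‖ₑ ^ p ∂stdGaussian E := by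
  have hp0 : 0 < p := two_pos.trans_le hp
  let v := fun z => weightedRestrict N W (innerCoeff u z)
  calc (∑' j : N, ENNReal.ofReal (‖u j‖ ^ 2 * W j ^ 2)) ^ (p / 2)
      ≤ (eLpNorm v (ENNReal.ofReal 2) (stdGaussian E) ^ (2 : ℝ)) ^ (p / 2) := by
        rw [eLpNorm_ofReal_rpow two_pos]
        gcongr
        exact tsum_norm_sq_le_lintegral_stdGaussian N W u
    _ = eLpNorm v (ENNReal.ofReal 2) (stdGaussian E) ^ p := by
        rw [← ENNReal.rpow_mul, mul_div_cancel₀ p two_ne_zero]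
    _ ≤ eLpNorm v (ENNReal.ofReal p) (stdGaussian E) ^ p := by
        gcongr
        exact eLpNorm_le_eLpNorm_of_exponent_le (ENNReal.ofReal_le_ofReal hp)
          (continuous_weightedRestrict_innerCoeff N W u).aestronglyMeasurable
    _ = ∫⁻ z, ‖v z‖ₑ ^ p ∂stdGaussian E := eLpNorm_ofReal_rpow hp0 v _

theorem pwNorm_norm_rpow_le_lintegral_stdGaussian (hp : 2 ≤ p) (P : Set (Set α)) (W : α → ℝ)
    (u : α →₀ E) :
    pwNorm p P W (fun a => ‖u a‖) ^ p ≤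
      ∫⁻ z, pwNorm p P W (innerCoeff u z) ^ p ∂stdGaussian E := by
  have hp0 : 0 < p := two_pos.trans_le hp
  let blockNorm (N : P) (z : E) : ℝ≥0∞ := ‖weightedRestrict N.1 W (innerCoeff u z)‖ₑ ^ p
  have aemeasurable_blockNorm (N : P) : AEMeasurable (blockNorm N) (stdGaussian E) :=
    (continuous_weightedRestrict_innerCoeff N.1 W u).enorm.measurable.aemeasurable.pow_const p
  calc pwNorm p P W (fun a => ‖u a‖) ^ p
      = ∑' N : P, (∑' j : N.1, ENNReal.ofReal (‖u j‖ ^ 2 * W j ^ 2)) ^ (p / 2) :=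
        pwNorm_rpow hp0 P W _
    _ ≤ ∑' N : P, ∫⁻ z, blockNorm N z ∂stdGaussian E :=
        ENNReal.tsum_le_tsum fun N => tsum_norm_sq_rpow_le_lintegral_stdGaussian hp N.1 W u
    _ ≤ ∫⁻ z, ∑' N : P, blockNorm N z ∂stdGaussian E :=
        tsum_lintegral_le_lintegral_tsum aemeasurable_blockNorm
    _ = ∫⁻ z, pwNorm p P W (innerCoeff u z) ^ p ∂stdGaussian E := by
        simp only [pwNorm_rpow_eq_tsum_enorm_weightedRestrict hp0, blockNorm]

end HilbertCoefficients

section DominatesPWNorm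

variable {Ω : Type*} [MeasurableSpace Ω] {μ : Measure Ω} {p : ℝ} {k : ℝ≥0∞} {P : Set (Set α)}
  {W : α → ℝ} {g : α → Ω → ℝ}

/-- The functions `g a` satisfy a lower `‖·‖_{P,W}` estimate in `L_p(μ)` with constant `k`. -/
def DominatesPWNorm (p : ℝ) (k : ℝ≥0∞) (P : Set (Set α)) (W : α → ℝ) (μ : Measure Ω)
    (g : α → Ω → ℝ) : Prop :=
  ∀ y : α →₀ ℝ, k * pwNorm p P W y ≤ eLpNorm (synthesis g y) (ENNReal.ofReal p) μ

theorem DominatesPWNorm.mul_pwNorm_norm_le_of_finiteDimensional [SFinite μ]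
    (hdom : DominatesPWNorm p k P W μ g) (hp : 2 ≤ p) (hg : ∀ a, Measurable (g a))
    {E : Type*} [NormedAddCommGroup E] [InnerProductSpace ℝ E] [FiniteDimensional ℝ E]
    (u : α →₀ E) :
    k * pwNorm p P W (fun a => ‖u a‖) ≤
      gaussianLpNorm (ENNReal.ofReal p) * eLpNorm (synthesis g u) (ENNReal.ofReal p) μ := by
  borelize E
  have hp0 : 0 < p := two_pos.trans_le hp
  have measurable_synthesis : Measurable (synthesis g u) :=
    (stronglyMeasurable_synthesis hg u).measurable
  rw [← ENNReal.rpow_le_rpow_iff hp0]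
  calc (k * pwNorm p P W fun a => ‖u a‖) ^ p
      ≤ k ^ p * ∫⁻ z, pwNorm p P W (innerCoeff u z) ^ p ∂stdGaussian E := by
        rw [ENNReal.mul_rpow_of_nonneg _ _ hp0.le]
        gcongr
        exact pwNorm_norm_rpow_le_lintegral_stdGaussian hp P W u
    _ ≤ ∫⁻ z, (k * pwNorm p P W (innerCoeff u z)) ^ p ∂stdGaussian E := by
        simp only [ENNReal.mul_rpow_of_nonneg _ _ hp0.le]
        exact lintegral_const_mul_le _ _
    _ ≤ ∫⁻ z, eLpNorm (fun t => ⟪z, synthesis g u t⟫) (ENNReal.ofReal p) μ ^ p ∂stdGaussian E := by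
        gcongr with z
        simpa only [← synthesis_innerCoeff] using hdom (innerCoeff u z)
    _ = ∫⁻ t, ∫⁻ z, ‖⟪synthesis g u t, z⟫‖ₑ ^ p ∂stdGaussian E ∂μ := by
        simp only [eLpNorm_ofReal_rpow hp0, real_inner_comm]
        exact lintegral_lintegral_swap (by fun_prop)
    _ = (gaussianLpNorm (ENNReal.ofReal p) *
          eLpNorm (synthesis g u) (ENNReal.ofReal p) μ) ^ p := by
        simp only [lintegral_enorm_inner_rpow_stdGaussian hp0,
          ENNReal.mul_rpow_of_nonneg _ _ hp0.le]
        rw [lintegral_mul_const _ (by fun_prop), eLpNorm_ofReal_rpow hp0, mul_comm]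

theorem DominatesPWNorm.mul_pwNorm_norm_le [SFinite μ]
    (hdom : DominatesPWNorm p k P W μ g) (hp : 2 ≤ p) (hg : ∀ a, Measurable (g a))
    {E : Type*} [NormedAddCommGroup E] [InnerProductSpace ℝ E] (u : α →₀ E) :
    k * pwNorm p P W (fun a => ‖u a‖) ≤
      gaussianLpNorm (ENNReal.ofReal p) * eLpNorm (synthesis g u) (ENNReal.ofReal p) μ := by
  let K : Submodule ℝ E := Submodule.span ℝ (Set.range u)
  have : FiniteDimensional ℝ K := FiniteDimensional.span_of_finite ℝ u.finite_range
  let proj : E →L[ℝ] K := K.orthogonalProjectionOnto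
  have norm_proj (a : α) : ‖proj (u a)‖ = ‖u a‖ :=
    Submodule.norm_orthogonalProjectionOnto_apply _ (Submodule.subset_span (Set.mem_range_self a))
  have h := hdom.mul_pwNorm_norm_le_of_finiteDimensional hp hg
    (Finsupp.mapRange.linearMap proj.toLinearMap u)
  simp only [Finsupp.mapRange.linearMap_apply, Finsupp.mapRange_apply] at h
  calc k * pwNorm p P W (fun a => ‖u a‖)
      = k * pwNorm p P W (fun a => ‖proj (u a)‖) := by simp only [norm_proj]
    _ ≤ gaussianLpNorm (ENNReal.ofReal p) *
          eLpNorm (fun t => proj (synthesis g u t)) (ENNReal.ofReal p) μ := by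
        refine h.trans_eq (congrArg (_ * eLpNorm · _ _) (funext fun t => ?_))
        exact (map_synthesis proj.toLinearMap g u t).symm
    _ ≤ gaussianLpNorm (ENNReal.ofReal p) * eLpNorm (synthesis g u) (ENNReal.ofReal p) μ := by
        gcongr
        exact eLpNorm_mono fun t => K.norm_orthogonalProjectionOnto_apply_le _

end DominatesPWNorm

section TensorProduct

variable {β Ω Ω' : Type*} [MeasurableSpace Ω] [MeasurableSpace Ω'] {p : ℝ}

/-- The norm `(Σ_{N∈P, M∈Q} (Σ_{a∈N, b∈M} c_{a,b}² W_a² V_b²)^{p/2})^{1/p}` that the pairs `(P, W)`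
and `(Q, V)` induce on doubly indexed scalars. -/
def pwTensorNorm (p : ℝ) (P : Set (Set α)) (W : α → ℝ) (Q : Set (Set β)) (V : β → ℝ)
    (c : α × β → ℝ) : ℝ≥0∞ :=
  (∑' (N : P) (M : Q), (∑' (a : N.1) (b : M.1),
    ENNReal.ofReal (c (a.1, b.1) ^ 2 * W a.1 ^ 2 * V b.1 ^ 2)) ^ (p / 2)) ^ (1 / p)

theorem pwTensorNorm_rpow (hp : 0 < p) (P : Set (Set α)) (W : α → ℝ) (Q : Set (Set β))
    (V : β → ℝ) (c : α × β →₀ ℝ) :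
    pwTensorNorm p P W Q V c ^ p =
      ∑' M : Q, pwNorm p P W (fun a => ‖weightedRestrict M.1 V (c.curry a)‖) ^ p := by
  have row_sum (a : α) (M : Q) :
      ∑' b : M.1, ENNReal.ofReal (c (a, b.1) ^ 2 * W a ^ 2 * V b.1 ^ 2) =
        ENNReal.ofReal (‖weightedRestrict M.1 V (c.curry a)‖ ^ 2 * W a ^ 2) := by
    rw [ENNReal.ofReal_mul (sq_nonneg _), ENNReal.ofReal_pow (norm_nonneg _), ofReal_norm,
      enorm_weightedRestrict_sq, ← ENNReal.tsum_mul_right]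
    refine tsum_congr fun b => ?_
    rw [← ENNReal.ofReal_mul (by positivity), Finsupp.curry_apply, mul_right_comm]
  rw [pwTensorNorm, one_div, ENNReal.rpow_inv_rpow hp.ne', ENNReal.tsum_comm]
  simp only [pwNorm_rpow hp, row_sum]

variable {μ : Measure Ω} {ν : Measure Ω'} {P : Set (Set α)} {W : α → ℝ}
  {Q : Set (Set β)} {V : β → ℝ} {kS kT : ℝ≥0∞} {f : α → Ω → ℝ} {g : β → Ω' → ℝ}

theorem DominatesPWNorm.mul_pwNorm_weightedRestrict_rpow_le [SFinite μ]
    (hS : DominatesPWNorm p kS P W μ f) (hp : 2 ≤ p)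
    (hf : ∀ a, Measurable (f a)) (M : Set β) (V : β → ℝ) (u : α →₀ β →₀ ℝ) :
    (kS * pwNorm p P W fun a => ‖weightedRestrict M V (u a)‖) ^ p ≤
      gaussianLpNorm (ENNReal.ofReal p) ^ p *
        ∫⁻ s, ‖weightedRestrict M V (synthesis f u s)‖ₑ ^ p ∂μ := by
  have hp0 : 0 < p := two_pos.trans_le hp
  have h := hS.mul_pwNorm_norm_le hp hf (Finsupp.mapRange.linearMap (weightedRestrict M V) u)
  simp only [Finsupp.mapRange.linearMap_apply, Finsupp.mapRange_apply] at h
  rw [← eLpNorm_ofReal_rpow hp0, ← ENNReal.mul_rpow_of_nonneg _ _ hp0.le]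
  simp only [map_synthesis]
  exact ENNReal.rpow_le_rpow h hp0.le

theorem DominatesPWNorm.mul_pwTensorNorm_rpow_le [SFinite μ]
    (hS : DominatesPWNorm p kS P W μ f) (hp : 2 ≤ p) (hf : ∀ a, Measurable (f a))
    (Q : Set (Set β)) (V : β → ℝ) (c : α × β →₀ ℝ) :
    (kS * pwTensorNorm p P W Q V c) ^ p ≤
      gaussianLpNorm (ENNReal.ofReal p) ^ p *
        ∫⁻ s, pwNorm p Q V ⇑(synthesis f c.curry s) ^ p ∂μ := by
  have hp0 : 0 < p := two_pos.trans_le hp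
  have aemeasurable_block (M : Q) :
      AEMeasurable (fun s => ‖weightedRestrict M.1 V (synthesis f c.curry s)‖ₑ ^ p) μ := by
    simp only [map_synthesis]
    exact ((stronglyMeasurable_synthesis hf _).enorm.pow_const p).aemeasurable
  calc (kS * pwTensorNorm p P W Q V c) ^ p
      = ∑' M : Q, (kS * pwNorm p P W fun a => ‖weightedRestrict M.1 V (c.curry a)‖) ^ p := by
        simp only [ENNReal.mul_rpow_of_nonneg _ _ hp0.le, pwTensorNorm_rpow hp0,
          ENNReal.tsum_mul_left]
    _ ≤ ∑' M : Q, gaussianLpNorm (ENNReal.ofReal p) ^ p *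
          ∫⁻ s, ‖weightedRestrict M.1 V (synthesis f c.curry s)‖ₑ ^ p ∂μ :=
        ENNReal.tsum_le_tsum fun M => hS.mul_pwNorm_weightedRestrict_rpow_le hp hf M.1 V c.curry
    _ ≤ gaussianLpNorm (ENNReal.ofReal p) ^ p *
          ∫⁻ s, ∑' M : Q, ‖weightedRestrict M.1 V (synthesis f c.curry s)‖ₑ ^ p ∂μ := by
        rw [ENNReal.tsum_mul_left]
        gcongr
        exact tsum_lintegral_le_lintegral_tsum aemeasurable_block
    _ = gaussianLpNorm (ENNReal.ofReal p) ^ p *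
          ∫⁻ s, pwNorm p Q V ⇑(synthesis f c.curry s) ^ p ∂μ := by
        simp only [pwNorm_rpow_eq_tsum_enorm_weightedRestrict hp0]

theorem DominatesPWNorm.rpow_mul_lintegral_pwNorm_le [SFinite ν]
    (hT : DominatesPWNorm p kT Q V ν g) (hp : 0 < p) (hf : ∀ a, Measurable (f a))
    (hg : ∀ b, Measurable (g b)) (c : α × β →₀ ℝ) :
    kT ^ p * ∫⁻ s, pwNorm p Q V ⇑(synthesis f c.curry s) ^ p ∂μ ≤
      eLpNorm (fun st : Ω × Ω' => ∑ ab ∈ c.support, c ab * f ab.1 st.1 * g ab.2 st.2)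
        (ENNReal.ofReal p) (μ.prod ν) ^ p := by
  have measurable_sum : Measurable fun st : Ω × Ω' =>
      ∑ ab ∈ c.support, c ab * f ab.1 st.1 * g ab.2 st.2 := by
    fun_prop
  calc kT ^ p * ∫⁻ s, pwNorm p Q V ⇑(synthesis f c.curry s) ^ p ∂μ
      ≤ ∫⁻ s, (kT * pwNorm p Q V ⇑(synthesis f c.curry s)) ^ p ∂μ := by
        simp only [ENNReal.mul_rpow_of_nonneg _ _ hp.le]
        exact lintegral_const_mul_le _ _
    _ ≤ ∫⁻ s, eLpNorm (synthesis g (synthesis f c.curry s)) (ENNReal.ofReal p) ν ^ p ∂μ := by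
        gcongr with s
        exact hT _
    _ = ∫⁻ s, ∫⁻ t, ‖∑ ab ∈ c.support, c ab * f ab.1 s * g ab.2 t‖ₑ ^ p ∂ν ∂μ := by
        simp only [eLpNorm_ofReal_rpow hp, synthesis_synthesis_curry]
    _ = eLpNorm (fun st : Ω × Ω' => ∑ ab ∈ c.support, c ab * f ab.1 st.1 * g ab.2 st.2)
          (ENNReal.ofReal p) (μ.prod ν) ^ p := by
        rw [eLpNorm_ofReal_rpow hp,
          lintegral_prod _ (measurable_sum.enorm.pow_const p).aemeasurable]

theorem DominatesPWNorm.mul_pwTensorNorm_le [SFinite μ] [SFinite ν]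
    (hS : DominatesPWNorm p kS P W μ f) (hT : DominatesPWNorm p kT Q V ν g) (hp : 2 ≤ p)
    (hf : ∀ a, Measurable (f a)) (hg : ∀ b, Measurable (g b)) (c : α × β →₀ ℝ) :
    kS * kT * pwTensorNorm p P W Q V c ≤ gaussianLpNorm (ENNReal.ofReal p) *
      eLpNorm (fun st : Ω × Ω' => ∑ ab ∈ c.support, c ab * f ab.1 st.1 * g ab.2 st.2)
        (ENNReal.ofReal p) (μ.prod ν) := by
  have hp0 : 0 < p := two_pos.trans_le hp
  rw [← ENNReal.rpow_le_rpow_iff hp0, mul_comm kS, mul_assoc,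
    ENNReal.mul_rpow_of_nonneg kT _ hp0.le, ENNReal.mul_rpow_of_nonneg (gaussianLpNorm _) _ hp0.le]
  calc kT ^ p * (kS * pwTensorNorm p P W Q V c) ^ p
      ≤ kT ^ p * (gaussianLpNorm (ENNReal.ofReal p) ^ p *
          ∫⁻ s, pwNorm p Q V ⇑(synthesis f c.curry s) ^ p ∂μ) := by
        gcongr
        exact hS.mul_pwTensorNorm_rpow_le hp hf Q V c
    _ = gaussianLpNorm (ENNReal.ofReal p) ^ p *
          (kT ^ p * ∫⁻ s, pwNorm p Q V ⇑(synthesis f c.curry s) ^ p ∂μ) := mul_left_comm _ _ _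
    _ ≤ _ := by
        gcongr
        exact hT.rpow_mul_lintegral_pwNorm_le hp0 hf hg c

end TensorProduct

section BoundedBelow

variable {Ω : Type*} [MeasurableSpace Ω] {μ : Measure Ω} {p : ℝ}

theorem coe_single_eq_smul_coordVec (a : α) (r : ℝ) : ⇑(Finsupp.single a r) = r • coordVec a := by
  ext b
  by_cases hb : b = a <;> simp [coordVec, hb]

theorem coeFn_ae_eq_synthesis (hp : 2 ≤ p) {𝒞 : Set (PWPair α)}
    (h𝒞 : IsPWFamily 𝒞) {S : (α → ℝ) → Lp ℝ (ENNReal.ofReal p) μ}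
    (hadd : ∀ x y, famNorm p 𝒞 x < ⊤ → famNorm p 𝒞 y < ⊤ → S (x + y) = S x + S y)
    (hsmul : ∀ (r : ℝ) (x), famNorm p 𝒞 x < ⊤ → S (r • x) = r • S x) (y : α →₀ ℝ) :
    S y =ᵐ[μ] synthesis (fun a => S (coordVec a)) y := by
  have finite_norm := famNorm_finsupp_lt_top hp h𝒞
  induction y using Finsupp.induction_linear with
  | zero =>
    have map_zero : S 0 = 0 := by simpa using hsmul 0 0 (finite_norm 0)
    rw [Finsupp.coe_zero, map_zero]
    exact Lp.coeFn_zero ..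
  | add x y hx hy =>
    rw [Finsupp.coe_add, hadd x y (finite_norm x) (finite_norm y)]
    filter_upwards [Lp.coeFn_add (S x) (S y), hx, hy] with t hadd_t hx_t hy_t
    rw [hadd_t, synthesis_add, Pi.add_apply, Pi.add_apply, hx_t, hy_t]
  | single a r =>
    have coordVec_finite : famNorm p 𝒞 (coordVec a) < ⊤ := by
      simpa [coe_single_eq_smul_coordVec] using finite_norm (Finsupp.single a 1)
    rw [coe_single_eq_smul_coordVec, hsmul r _ coordVec_finite]
    filter_upwards [Lp.coeFn_smul r (S (coordVec a))] with t hsmul_t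
    rw [hsmul_t, synthesis_single]
    exact mul_comm _ _

theorem dominatesPWNorm_of_boundedBelow (hp : 2 ≤ p) {𝒞 : Set (PWPair α)}
    (h𝒞 : IsPWFamily 𝒞) {S : (α → ℝ) → Lp ℝ (ENNReal.ofReal p) μ}
    (hadd : ∀ x y, famNorm p 𝒞 x < ⊤ → famNorm p 𝒞 y < ⊤ → S (x + y) = S x + S y)
    (hsmul : ∀ (r : ℝ) (x), famNorm p 𝒞 x < ⊤ → S (r • x) = r • S x) {k : ℝ≥0∞}
    (hlb : ∀ x, famNorm p 𝒞 x < ⊤ → k * famNorm p 𝒞 x ≤ ENNReal.ofReal ‖S x‖)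
    {PW : PWPair α} (hPW : PW ∈ 𝒞) :
    DominatesPWNorm p k PW.1 PW.2 μ fun a => S (coordVec a) := fun y => by
  calc k * pwNorm p PW.1 PW.2 y ≤ k * famNorm p 𝒞 y := by
        gcongr
        exact pwNorm_le_famNorm hPW y
    _ ≤ ENNReal.ofReal ‖S y‖ := hlb y (famNorm_finsupp_lt_top hp h𝒞 y)
    _ = eLpNorm (synthesis (fun a => S (coordVec a)) y) (ENNReal.ofReal p) μ := by
        rw [Lp.norm_def, ENNReal.ofReal_toReal (Lp.eLpNorm_ne_top _)]
        exact eLpNorm_congr_ae (coeFn_ae_eq_synthesis hp h𝒞 hadd hsmul y)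

end BoundedBelow

theorem statement12_general {A B Ω Ω' : Type*} [MeasurableSpace Ω] [MeasurableSpace Ω']
    {μ : Measure Ω} {ν : Measure Ω'} [SFinite μ] [SFinite ν] {p : ℝ} (hp : 2 ≤ p)
    {𝒞 : Set (PWPair A)} {𝒟 : Set (PWPair B)} (h𝒞 : IsPWFamily 𝒞) (h𝒟 : IsPWFamily 𝒟)
    {S : (A → ℝ) → Lp ℝ (ENNReal.ofReal p) μ} {T : (B → ℝ) → Lp ℝ (ENNReal.ofReal p) ν}
    {cS cT : ℝ} (hcS : 0 < cS) (hcT : 0 < cT)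
    (hSadd : ∀ x y, famNorm p 𝒞 x < ⊤ → famNorm p 𝒞 y < ⊤ → S (x + y) = S x + S y)
    (hSsmul : ∀ (r : ℝ) (x), famNorm p 𝒞 x < ⊤ → S (r • x) = r • S x)
    (hSlb : ∀ x, famNorm p 𝒞 x < ⊤ →
      ENNReal.ofReal cS * famNorm p 𝒞 x ≤ ENNReal.ofReal ‖S x‖)
    (hTadd : ∀ x y, famNorm p 𝒟 x < ⊤ → famNorm p 𝒟 y < ⊤ → T (x + y) = T x + T y)
    (hTsmul : ∀ (r : ℝ) (x), famNorm p 𝒟 x < ⊤ → T (r • x) = r • T x)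
    (hTlb : ∀ x, famNorm p 𝒟 x < ⊤ →
      ENNReal.ofReal cT * famNorm p 𝒟 x ≤ ENNReal.ofReal ‖T x‖) :
    ∃ C : ℝ, 0 < C ∧ ∀ c : A × B →₀ ℝ, ∀ PW ∈ 𝒞, ∀ QV ∈ 𝒟,
      ENNReal.ofReal C * pwTensorNorm p PW.1 PW.2 QV.1 QV.2 c ≤
        eLpNorm (fun st : Ω × Ω' =>
            ∑ ab ∈ c.support, c ab * S (coordVec ab.1) st.1 * T (coordVec ab.2) st.2)
          (ENNReal.ofReal p) (μ.prod ν) := by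
  set γ := gaussianLpNorm (ENNReal.ofReal p)
  have γ_ne_top : γ ≠ ⊤ := gaussianLpNorm_ne_top ENNReal.ofReal_ne_top
  have γ_ne_zero : γ ≠ 0 :=
    (one_pos.trans_le (one_le_gaussianLpNorm (by simpa using ENNReal.ofReal_le_ofReal hp))).ne'
  refine ⟨cS * cT / γ.toReal, div_pos (mul_pos hcS hcT) (ENNReal.toReal_pos γ_ne_zero γ_ne_top),
    fun c PW hPW QV hQV => ?_⟩
  have hS := dominatesPWNorm_of_boundedBelow hp h𝒞 hSadd hSsmul hSlb hPW
  have hT := dominatesPWNorm_of_boundedBelow hp h𝒟 hTadd hTsmul hTlb hQV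
  have h := hS.mul_pwTensorNorm_le hT hp (fun a => (Lp.stronglyMeasurable _).measurable)
    (fun b => (Lp.stronglyMeasurable _).measurable) c
  rw [ENNReal.ofReal_div_of_pos (ENNReal.toReal_pos γ_ne_zero γ_ne_top),
    ENNReal.ofReal_toReal γ_ne_top, ENNReal.ofReal_mul hcS.le, ← ENNReal.mul_div_right_comm]
  exact ENNReal.div_le_of_le_mul' h

/-- Lower estimate for tensor products: if `X = X(𝒞)`, `Y = X(𝒟)`
(families with the envelope property), and `S, T` embed them into `L_p([0,1])`
(bounded above and below), then there is `C > 0` such that for all finitely supported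
scalars `c` and all `(P,(w_a)) ∈ 𝒞`, `(Q,(w'_b)) ∈ 𝒟`,
`‖Σ c_{a,b} Sx_a ⊗ Ty_b‖_{L_p([0,1]²)}
  ≥ C (Σ_{p₀∈P,q₀∈Q} (Σ_{a∈p₀,b∈q₀} c_{a,b}² w_a² w'_b²)^{p/2})^{1/p}`. -/
theorem statement12 {A B : Type*} [Countable A] [Countable B] (p : ℝ) (hp : 2 < p)
    [Fact (1 ≤ ENNReal.ofReal p)]
    (𝒞 : Set (PWPair A)) (𝒟 : Set (PWPair B))
    (h𝒞 : IsPWFamily 𝒞) (h𝒟 : IsPWFamily 𝒟)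
    (henv𝒞 : EnvelopeProp 𝒞) (henv𝒟 : EnvelopeProp 𝒟)
    (S : (A → ℝ) → MeasureTheory.Lp ℝ (ENNReal.ofReal p)
      (volume : Measure ↥(Set.Icc (0 : ℝ) 1)))
    (T : (B → ℝ) → MeasureTheory.Lp ℝ (ENNReal.ofReal p)
      (volume : Measure ↥(Set.Icc (0 : ℝ) 1)))
    (MS cS MT cT : ℝ) (hcS : 0 < cS) (hcT : 0 < cT)
    (hSadd : ∀ x y, famNorm p 𝒞 x < ⊤ → famNorm p 𝒞 y < ⊤ → S (x + y) = S x + S y)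
    (hSsmul : ∀ (r : ℝ) (x), famNorm p 𝒞 x < ⊤ → S (r • x) = r • S x)
    (hSub : ∀ x, famNorm p 𝒞 x < ⊤ →
      ENNReal.ofReal ‖S x‖ ≤ ENNReal.ofReal MS * famNorm p 𝒞 x)
    (hSlb : ∀ x, famNorm p 𝒞 x < ⊤ →
      ENNReal.ofReal cS * famNorm p 𝒞 x ≤ ENNReal.ofReal ‖S x‖)
    (hTadd : ∀ x y, famNorm p 𝒟 x < ⊤ → famNorm p 𝒟 y < ⊤ → T (x + y) = T x + T y)
    (hTsmul : ∀ (r : ℝ) (x), famNorm p 𝒟 x < ⊤ → T (r • x) = r • T x)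
    (hTub : ∀ x, famNorm p 𝒟 x < ⊤ →
      ENNReal.ofReal ‖T x‖ ≤ ENNReal.ofReal MT * famNorm p 𝒟 x)
    (hTlb : ∀ x, famNorm p 𝒟 x < ⊤ →
      ENNReal.ofReal cT * famNorm p 𝒟 x ≤ ENNReal.ofReal ‖T x‖) :
    ∃ C : ℝ, 0 < C ∧
      ∀ c : A × B →₀ ℝ, ∀ PW ∈ 𝒞, ∀ QV ∈ 𝒟,
        ENNReal.ofReal C *
          (∑' (N : PW.1) (Mq : QV.1),
            (∑' (a : N.1) (b : Mq.1),
              ENNReal.ofReal ((c (a.1, b.1)) ^ 2 * (PW.2 a.1) ^ 2 * (QV.2 b.1) ^ 2))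
            ^ (p / 2)) ^ (1 / p)
        ≤ MeasureTheory.eLpNorm
            (fun st : ↥(Set.Icc (0 : ℝ) 1) × ↥(Set.Icc (0 : ℝ) 1) =>
              ∑ ab ∈ c.support, c ab * (S (coordVec ab.1)) st.1 * (T (coordVec ab.2)) st.2)
            (ENNReal.ofReal p) (volume.prod volume) :=
  statement12_general hp.le h𝒞 h𝒟 hcS hcT hSadd hSsmul hSlb hTadd hTsmul hTlb
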